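/- arXiv:1510.00354 — 3 statements merged into one kernel-verified Lean document; each statement's English description precedes it below -/
import Mathlib

section
/- There exists a sequence (f_v)_{v ∈ ℕ}, where f_v is a 3-uniform hypergraph property on v vertices, together with constants c, C > 0 and v₀ ∈ ℕ, such that for all v ≥ v₀: s(f_v) ≤ C·v^{3/2} and bs(f_v) ≥ c·v^{9/4}; that is, s(f_v) = O(v^{3/2}) and bs(f_v) = Ω(v^{9/4}). -/
open Finset

/-- The coordinate set: `k`-element subsets of `Fin v`. -/
abbrev KSet (v k : ℕ) : Type := {S : Finset (Fin v) // S.card = k}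

/-- A `k`-uniform hypergraph on `Fin v`: a Boolean function on `k`-sets. -/
abbrev HGraph (v k : ℕ) : Type := KSet v k → Bool

/-- Sensitivity of `f` at input `x`: the number of coordinates whose flip changes `f`. -/
def localSens {I : Type} [Fintype I] [DecidableEq I]
    (f : (I → Bool) → Bool) (x : I → Bool) : ℕ :=
  (Finset.univ.filter fun i => f (Function.update x i (!x i)) ≠ f x).card

/-- Sensitivity of `f`: maximum of `localSens f x` over all inputs `x`. -/
def sens {I : Type} [Fintype I] [DecidableEq I] (f : (I → Bool) → Bool) : ℕ :=
  Finset.univ.sup (localSens f)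

/-- `sensOn b f` is `s^b(f)`: max sensitivity over inputs with `f x = b`. -/
def sensOn {I : Type} [Fintype I] [DecidableEq I] (b : Bool) (f : (I → Bool) → Bool) : ℕ :=
  (Finset.univ.filter fun x => f x = b).sup (localSens f)

/-- Flip all the coordinates of `x` in the block `B`. -/
def flipBlock {I : Type} [DecidableEq I] (x : I → Bool) (B : Finset I) : I → Bool :=
  fun i => if i ∈ B then !x i else x i

/-- Block sensitivity of `f` at `x`: maximum number of pairwise disjoint sensitive blocks. -/
noncomputable def localBlockSens {I : Type} [Fintype I] [DecidableEq I]
    (f : (I → Bool) → Bool) (x : I → Bool) : ℕ :=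
  sSup {n : ℕ | ∃ B : Fin n → Finset I,
    (∀ j, f (flipBlock x (B j)) ≠ f x) ∧
    ∀ j j', j ≠ j' → Disjoint (B j) (B j')}

/-- Block sensitivity of `f`. -/
noncomputable def blockSens {I : Type} [Fintype I] [DecidableEq I]
    (f : (I → Bool) → Bool) : ℕ :=
  Finset.univ.sup (localBlockSens f)

/-- Image of a `k`-set under a permutation of the vertices. -/
def permKSet {v k : ℕ} (σ : Equiv.Perm (Fin v)) (S : KSet v k) : KSet v k :=
  ⟨S.1.map σ.toEmbedding, by rw [Finset.card_map]; exact S.2⟩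

/-- A `k`-uniform hypergraph property: invariance under all vertex permutations,
where `(σ • G) S = G (σ⁻¹ S)`. -/
def IsHypergraphProperty {v k : ℕ} (f : HGraph v k → Bool) : Prop :=
  ∀ (σ : Equiv.Perm (Fin v)) (G : HGraph v k),
    f (fun S => G (permKSet σ⁻¹ S)) = f G

/-- `S` is a clique of `G`, and no edge of `G` outside `S` meets `S` in two vertices. -/
def IsIsolatedClique {v : ℕ} (G : HGraph v 3) (S : Finset (Fin v)) : Prop :=
  ∀ T : KSet v 3, 2 ≤ (T.1 ∩ S).card → (G T = true ↔ T.1 ⊆ S)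

open Classical in
/-- The property of having an isolated clique with `q` vertices. -/
noncomputable def hasIsolatedClique (q v : ℕ) (G : HGraph v 3) : Bool :=
  decide (∃ S : Finset (Fin v), S.card = q ∧ IsIsolatedClique G S)

lemma hasIsolatedClique_eq_true {q v : ℕ} {G : HGraph v 3} :
    hasIsolatedClique q v G = true ↔
      ∃ S : Finset (Fin v), S.card = q ∧ IsIsolatedClique G S := by
  simp [hasIsolatedClique]

lemma IsIsolatedClique.perm {v : ℕ} {G : HGraph v 3} {S : Finset (Fin v)}
    (h : IsIsolatedClique G S) (σ : Equiv.Perm (Fin v)) :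
    IsIsolatedClique (fun T => G (permKSet σ T)) (S.map σ⁻¹.toEmbedding) := by
  intro T hT
  have hmap : (S.map σ⁻¹.toEmbedding).map σ.toEmbedding = S := by
    ext x
    simp [Equiv.Perm.inv_def]
  have hcard : ((permKSet σ T).1 ∩ S).card = (T.1 ∩ S.map σ⁻¹.toEmbedding).card := by
    conv_lhs => rw [← hmap]
    change (T.1.map σ.toEmbedding ∩ _).card = _
    rw [← Finset.map_inter, Finset.card_map]
  have hsub : (permKSet σ T).1 ⊆ S ↔ T.1 ⊆ S.map σ⁻¹.toEmbedding := by
    conv_lhs => rw [← hmap]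
    exact Finset.map_subset_map
  rw [← hsub]
  exact h _ (hcard ▸ hT)

lemma isHypergraphProperty_hasIsolatedClique (q v : ℕ) :
    IsHypergraphProperty (hasIsolatedClique q v) := by
  intro σ G
  rw [Bool.eq_iff_iff, hasIsolatedClique_eq_true, hasIsolatedClique_eq_true]
  constructor
  · rintro ⟨S, hS, h⟩
    refine ⟨S.map σ⁻¹.toEmbedding, by simpa using hS, ?_⟩
    have h' := h.perm σ
    have hcancel : ∀ T : KSet v 3, permKSet σ⁻¹ (permKSet σ T) = T := by
      intro T
      apply Subtype.ext
      ext x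
      simp [permKSet, Equiv.Perm.inv_def]
    simpa only [hcancel] using h'
  · rintro ⟨S, hS, h⟩
    exact ⟨S.map σ⁻¹⁻¹.toEmbedding, by simpa using hS, h.perm σ⁻¹⟩

/-- The triple with vertices `a`, `b`, `c`. -/
def triple {v : ℕ} {a b c : Fin v} (hab : a ≠ b) (hac : a ≠ c) (hbc : b ≠ c) : KSet v 3 :=
  ⟨{a, b, c}, Finset.card_eq_three.2 ⟨a, b, c, hab, hac, hbc, rfl⟩⟩

/-- The number of triples meeting `S` in at least two vertices is at most `|S|² v`. -/
lemma card_triples_meeting_le {v : ℕ} (S : Finset (Fin v)) :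
    (univ.filter fun T : KSet v 3 => 2 ≤ (T.1 ∩ S).card).card ≤ S.card * S.card * v := by
  have hsub : (univ.filter fun T : KSet v 3 => 2 ≤ (T.1 ∩ S).card).map
      (Function.Embedding.subtype _) ⊆
      ((S ×ˢ S) ×ˢ (univ : Finset (Fin v))).image
        fun x => ({x.1.1, x.1.2, x.2} : Finset (Fin v)) := by
    intro T hT
    simp only [Finset.mem_map, mem_filter, mem_univ, true_and] at hT
    obtain ⟨⟨T, hT3⟩, h2, rfl⟩ := hT
    obtain ⟨a, ha, b, hb, hab⟩ := Finset.one_lt_card.1 h2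
    simp only [Finset.mem_inter] at ha hb
    obtain ⟨c, hc⟩ : ∃ c, T \ {a, b} = {c} := by
      rw [← Finset.card_eq_one, Finset.card_sdiff_of_subset (by
        intro x hx
        simp only [Finset.mem_insert, Finset.mem_singleton] at hx
        rcases hx with rfl | rfl
        exacts [ha.1, hb.1]), hT3, Finset.card_pair hab]
    refine Finset.mem_image.2 ⟨((a, b), c), by simp [ha.2, hb.2], ?_⟩
    ext x
    have hx := congrArg (x ∈ ·) hc
    simp only [Finset.mem_sdiff, Finset.mem_insert, Finset.mem_singleton, eq_iff_iff] at hx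
    simp only [Finset.mem_insert, Finset.mem_singleton, Function.Embedding.subtype_apply]
    grind
  calc _ = _ := (Finset.card_map _).symm
    _ ≤ _ := Finset.card_le_card hsub
    _ ≤ _ := Finset.card_image_le
    _ = _ := by simp

lemma localSens_le_of_true {q v : ℕ} {G : HGraph v 3} (hG : hasIsolatedClique q v G = true) :
    localSens (hasIsolatedClique q v) G ≤ q * q * v := by
  obtain ⟨S, rfl, h⟩ := hasIsolatedClique_eq_true.1 hG
  refine (Finset.card_le_card ?_).trans (card_triples_meeting_le S)
  intro T hT
  simp only [mem_filter, mem_univ, true_and] at hT ⊢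
  by_contra hlt
  apply hT
  rw [hG, hasIsolatedClique_eq_true]
  refine ⟨S, rfl, fun K hK => ?_⟩
  rw [Function.update_of_ne (by rintro rfl; exact hlt hK)]
  exact h K hK

/-- Two distinct large sets sharing two vertices cannot both become isolated cliques after
flipping one triple each. -/
lemma eq_of_isIsolatedClique_update {v q : ℕ} (hq : 4 ≤ q) {G : HGraph v 3}
    {S S' : Finset (Fin v)} (hS : S.card = q) (hS' : S'.card = q) {T T' : KSet v 3}
    {s s' : Bool} (h : IsIsolatedClique (Function.update G T s) S)
    (h' : IsIsolatedClique (Function.update G T' s') S') (hint : 2 ≤ (S ∩ S').card) :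
    S = S' := by
  by_contra hne
  have hconf : ∀ a b x : Fin v, a ∈ S ∩ S' → b ∈ S ∩ S' → ∀ (hab : a ≠ b) (hax : a ≠ x)
      (hbx : b ≠ x), ¬ (x ∈ S ↔ x ∈ S') → triple hab hax hbx = T ∨ triple hab hax hbx = T' := by
    intro a b x ha hb hab hax hbx hx
    by_contra hcon
    push Not at hcon
    rw [Finset.mem_inter] at ha hb
    have hmeet : ∀ R : Finset (Fin v), a ∈ R → b ∈ R →
        2 ≤ ((triple hab hax hbx).1 ∩ R).card := by
      intro R haR hbR
      refine Finset.one_lt_card.2 ⟨a, ?_, b, ?_, hab⟩ <;> simp [triple, haR, hbR]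
    have h1 := h _ (hmeet S ha.1 hb.1)
    have h2 := h' _ (hmeet S' ha.2 hb.2)
    rw [Function.update_of_ne hcon.1] at h1
    rw [Function.update_of_ne hcon.2] at h2
    have h3 := h1.symm.trans h2
    simp only [triple, Finset.insert_subset_iff, Finset.singleton_subset_iff, ha, hb,
      true_and] at h3
    exact hx h3
  have hsplit : (S \ S').card + (S ∩ S').card = q := by
    rw [Finset.card_sdiff_add_card_inter, hS]
  have hsplit' : (S' \ S).card + (S ∩ S').card = q := by
    rw [Finset.inter_comm, Finset.card_sdiff_add_card_inter, hS']
  have hpos : 0 < (S \ S').card := by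
    rw [Finset.card_pos, Finset.sdiff_nonempty]
    exact fun hsub => hne (Finset.eq_of_subset_of_card_le hsub (by omega))
  have hmem : ∀ {a b c x : Fin v} (hab : a ≠ b) (hac : a ≠ c) (hbc : b ≠ c),
      x ∈ (triple hab hac hbc).1 ↔ x = a ∨ x = b ∨ x = c := by
    intro a b c x hab hac hbc
    simp [triple]
  have hpigeon : ∀ K₁ K₂ K₃ : KSet v 3, (K₁ = T ∨ K₁ = T') → (K₂ = T ∨ K₂ = T') →
      (K₃ = T ∨ K₃ = T') → K₁ = K₂ ∨ K₁ = K₃ ∨ K₂ = K₃ := by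
    grind
  rcases Nat.lt_or_ge 2 (S ∩ S').card with h3 | h3
  · obtain ⟨a, ha, b, hb, c, hc, hab, hac, hbc⟩ := Finset.two_lt_card.1 h3
    obtain ⟨x, hx⟩ := Finset.card_pos.1 hpos
    rw [Finset.mem_sdiff] at hx
    have hcx : ∀ y ∈ S ∩ S', y ≠ x := by
      rintro y hy rfl
      exact hx.2 (Finset.mem_inter.1 hy).2
    have hx' : ¬ (x ∈ S ↔ x ∈ S') := by tauto
    have hax := hcx a ha
    have hbx := hcx b hb
    have hcx := hcx c hc
    rcases hpigeon _ _ _ (hconf a b x ha hb hab hax hbx hx')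
      (hconf a c x ha hc hac hax hcx hx') (hconf b c x hb hc hbc hbx hcx hx') with e | e | e
    · have := (hmem hac hax hcx).1 (e ▸ (hmem hab hax hbx).2 (Or.inr (Or.inl rfl)))
      grind
    · have := (hmem hbc hbx hcx).1 (e ▸ (hmem hab hax hbx).2 (Or.inl rfl))
      grind
    · have := (hmem hbc hbx hcx).1 (e ▸ (hmem hac hax hcx).2 (Or.inl rfl))
      grind
  · obtain ⟨a, ha, b, hb, hab⟩ := Finset.one_lt_card.1 hint
    obtain ⟨x, hx, y, hy, hxy⟩ := Finset.one_lt_card.1 (show 1 < (S \ S').card by omega)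
    obtain ⟨z, hz⟩ := Finset.card_pos.1 (show 0 < (S' \ S).card by omega)
    rw [Finset.mem_sdiff] at hx hy hz
    have hout : ∀ w, ¬ (w ∈ S ↔ w ∈ S') → ∀ u ∈ S ∩ S', u ≠ w := by
      rintro w hw u hu rfl
      rw [Finset.mem_inter] at hu
      tauto
    have hx' : ¬ (x ∈ S ↔ x ∈ S') := by tauto
    have hy' : ¬ (y ∈ S ↔ y ∈ S') := by tauto
    have hz' : ¬ (z ∈ S ↔ z ∈ S') := by tauto
    have hax := hout x hx' a ha
    have hbx := hout x hx' b hb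
    have hay := hout y hy' a ha
    have hby := hout y hy' b hb
    have haz := hout z hz' a ha
    have hbz := hout z hz' b hb
    rcases hpigeon _ _ _ (hconf a b x ha hb hab hax hbx hx')
      (hconf a b y ha hb hab hay hby hy') (hconf a b z ha hb hab haz hbz hz') with e | e | e
    · have := (hmem hab hay hby).1 (e ▸ (hmem hab hax hbx).2 (Or.inr (Or.inr rfl)))
      grind
    · have := (hmem hab haz hbz).1 (e ▸ (hmem hab hax hbx).2 (Or.inr (Or.inr rfl)))
      grind
    · have := (hmem hab haz hbz).1 (e ▸ (hmem hab hay hby).2 (Or.inr (Or.inr rfl)))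
      grind

/-- If `S` is not an isolated clique, at most one flip turns it into one. -/
lemma eq_of_isIsolatedClique_flip {v : ℕ} {G : HGraph v 3} {S : Finset (Fin v)}
    (hG : ¬ IsIsolatedClique G S) {T T' : KSet v 3}
    (h : IsIsolatedClique (Function.update G T (!G T)) S)
    (h' : IsIsolatedClique (Function.update G T' (!G T')) S) : T = T' := by
  by_contra hne
  apply hG
  intro K hK
  by_cases hKT : K = T
  · have := h' K hK
    rwa [Function.update_of_ne (hKT ▸ hne)] at this
  · have := h K hK
    rwa [Function.update_of_ne hKT] at this

lemma localSens_mul_le_of_false {q v : ℕ} (hq : 4 ≤ q) {G : HGraph v 3}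
    (hG : hasIsolatedClique q v G = false) :
    localSens (hasIsolatedClique q v) G * (q * q - q) ≤ v * v := by
  have hno : ∀ S : Finset (Fin v), S.card = q → ¬ IsIsolatedClique G S := by
    intro S hS h
    rw [hasIsolatedClique_eq_true.2 ⟨S, hS, h⟩] at hG
    cases hG
  unfold localSens
  set Z := univ.filter fun T : KSet v 3 =>
    hasIsolatedClique q v (Function.update G T (!G T)) ≠ hasIsolatedClique q v G
  have hZ : ∀ T : KSet v 3, ∃ S : Finset (Fin v), T ∈ Z →
      S.card = q ∧ IsIsolatedClique (Function.update G T (!G T)) S := by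
    intro T
    by_cases hT : T ∈ Z
    · have hT' := (mem_filter.1 hT).2
      rw [hG, ne_eq, Bool.not_eq_false, hasIsolatedClique_eq_true] at hT'
      obtain ⟨S, hS⟩ := hT'
      exact ⟨S, fun _ => hS⟩
    · exact ⟨∅, fun h => absurd h hT⟩
  choose S hS using hZ
  have hdisj : (Z : Set (KSet v 3)).PairwiseDisjoint fun T => (S T).offDiag := by
    intro T hT T' hT' hne
    obtain ⟨hc, hi⟩ := hS T hT
    obtain ⟨hc', hi'⟩ := hS T' hT'
    refine Finset.disjoint_left.2 ?_
    rintro ⟨a, b⟩ h1 h2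
    rw [Finset.mem_offDiag] at h1 h2
    have hSS : S T = S T' := eq_of_isIsolatedClique_update hq hc hc' hi hi'
      (Finset.one_lt_card.2 ⟨a, Finset.mem_inter.2 ⟨h1.1, h2.1⟩, b,
        Finset.mem_inter.2 ⟨h1.2.1, h2.2.1⟩, h1.2.2⟩)
    exact hne (eq_of_isIsolatedClique_flip (hno _ hc) hi (hSS ▸ hi'))
  calc Z.card * (q * q - q) = ∑ T ∈ Z, (S T).offDiag.card := by
        rw [Finset.sum_congr rfl fun T hT => by rw [Finset.offDiag_card, (hS T hT).1],
          Finset.sum_const, smul_eq_mul]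
    _ = (Z.biUnion fun T => (S T).offDiag).card := (Finset.card_biUnion hdisj).symm
    _ ≤ Fintype.card (Fin v × Fin v) := Finset.card_le_univ _
    _ = v * v := by simp

/-- A family of disjoint sensitive blocks bounds the block sensitivity from below. -/
lemma card_le_blockSens {I J : Type} [Fintype I] [DecidableEq I] [Fintype J]
    {f : (I → Bool) → Bool} {x : I → Bool} {B : J → Finset I}
    (hB : ∀ j, f (flipBlock x (B j)) ≠ f x) (hdisj : ∀ j j', j ≠ j' → Disjoint (B j) (B j')) :
    Fintype.card J ≤ blockSens f := by
  refine le_trans ?_ (Finset.le_sup (f := localBlockSens f) (mem_univ x))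
  refine le_csSup ⟨Fintype.card I, ?_⟩ ?_
  · rintro n ⟨B, hB, hdisj⟩
    have hne : ∀ j, (B j).Nonempty := by
      intro j
      rw [Finset.nonempty_iff_ne_empty]
      intro h
      apply hB j
      rw [h]
      congr 1
    choose g hg using hne
    have hinj : Function.Injective g := by
      intro j j' h
      by_contra hne
      exact Finset.disjoint_left.1 (hdisj j j' hne) (hg j) (h ▸ hg j')
    simpa using Fintype.card_le_of_injective g hinj
  · let e := (Fintype.equivFin J).symm
    exact ⟨fun j => B (e j), fun j => hB _, fun j j' h => hdisj _ _ (e.injective.ne h)⟩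

/-- A quadratic polynomial with three distinct roots vanishes. -/
lemma quadratic_eq_zero {F : Type*} [Field F] {a b c i j k : F} (hij : i ≠ j) (hik : i ≠ k)
    (hjk : j ≠ k) (hi : a + b * i + c * i ^ 2 = 0) (hj : a + b * j + c * j ^ 2 = 0)
    (hk : a + b * k + c * k ^ 2 = 0) : a = 0 ∧ b = 0 ∧ c = 0 := by
  have h1 : b + c * (i + j) = 0 :=
    (mul_eq_zero.1 (by linear_combination hi - hj : (i - j) * (b + c * (i + j)) = 0)).resolve_left
      (sub_ne_zero.2 hij)
  have h2 : b + c * (i + k) = 0 :=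
    (mul_eq_zero.1 (by linear_combination hi - hk : (i - k) * (b + c * (i + k)) = 0)).resolve_left
      (sub_ne_zero.2 hik)
  have hc : c = 0 :=
    (mul_eq_zero.1 (by linear_combination h1 - h2 : (j - k) * c = 0)).resolve_left
      (sub_ne_zero.2 hjk)
  subst hc
  have hb : b = 0 := by linear_combination h1
  subst hb
  exact ⟨by linear_combination hi, rfl, rfl⟩

/-- There are `p ^ 3` sets of size `q`, no two of which share a triple. -/
lemma exists_partial_steiner_system {p q v : ℕ} (hp : p.Prime) (hqp : q ≤ p) (hv : q * p ≤ v) :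
    ∃ S : ZMod p × ZMod p × ZMod p → Finset (Fin v), (∀ u, (S u).card = q) ∧
      ∀ u u', u ≠ u' → ∀ T : KSet v 3, T.1 ⊆ S u → ¬ T.1 ⊆ S u' := by
  have : Fact p.Prime := ⟨hp⟩
  obtain ⟨e⟩ : Nonempty (Fin q × ZMod p ↪ Fin v) :=
    Function.Embedding.nonempty_of_card_le (by simpa [ZMod.card] using hv)
  have hcast : Function.Injective fun i : Fin q => ((i : ℕ) : ZMod p) := by
    intro i j hij
    have := congrArg ZMod.val hij
    simp only [ZMod.val_cast_of_lt (i.2.trans_le hqp), ZMod.val_cast_of_lt (j.2.trans_le hqp)]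
      at this
    exact Fin.ext this
  let g : ZMod p × ZMod p × ZMod p → Fin q → Fin v := fun u i =>
    e (i, u.1 + u.2.1 * ((i : ℕ) : ZMod p) + u.2.2 * ((i : ℕ) : ZMod p) ^ 2)
  have hg : ∀ u, Function.Injective (g u) := fun u i j hij => (Prod.ext_iff.1 (e.injective hij)).1
  refine ⟨fun u => univ.image (g u), fun u => by
    rw [Finset.card_image_of_injective _ (hg u), Finset.card_univ, Fintype.card_fin], ?_⟩
  intro u u' hne T hT hT'
  apply hne
  have hroot : ∀ t ∈ T.1, ∃ i : Fin q, g u i = t ∧ (u.1 - u'.1) +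
      (u.2.1 - u'.2.1) * ((i : ℕ) : ZMod p) + (u.2.2 - u'.2.2) * ((i : ℕ) : ZMod p) ^ 2 = 0 := by
    intro t ht
    obtain ⟨i, -, hi⟩ := Finset.mem_image.1 (hT ht)
    obtain ⟨j, -, hj⟩ := Finset.mem_image.1 (hT' ht)
    obtain ⟨rfl, h2⟩ := Prod.ext_iff.1 (e.injective (hi.trans hj.symm))
    exact ⟨_, hi, by linear_combination h2⟩
  obtain ⟨a, b, c, hab, hac, hbc, habc⟩ := Finset.card_eq_three.1 T.2
  obtain ⟨i, rfl, hi⟩ := hroot a (by simp [habc])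
  obtain ⟨j, rfl, hj⟩ := hroot b (by simp [habc])
  obtain ⟨k, rfl, hk⟩ := hroot c (by simp [habc])
  have hdist : ∀ {i j : Fin q}, g u i ≠ g u j → ((i : ℕ) : ZMod p) ≠ ((j : ℕ) : ZMod p) :=
    fun h h' => h (congrArg _ (hcast h'))
  obtain ⟨h0, h1, h2⟩ := quadratic_eq_zero (hdist hab) (hdist hac) (hdist hbc) hi hj hk
  exact Prod.ext (sub_eq_zero.1 h0) (Prod.ext (sub_eq_zero.1 h1) (sub_eq_zero.1 h2))

lemma pow_three_le_blockSens {p q v : ℕ} (hp : p.Prime) (hq : 3 ≤ q) (hqp : q ≤ p)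
    (hv : q * p ≤ v) : p ^ 3 ≤ blockSens (hasIsolatedClique q v) := by
  have : Fact p.Prime := ⟨hp⟩
  obtain ⟨S, hS, hdisj⟩ := exists_partial_steiner_system hp hqp hv
  have hempty : hasIsolatedClique q v (fun _ => false) = false := by
    rw [← Bool.not_eq_true, hasIsolatedClique_eq_true]
    rintro ⟨R, hR, h⟩
    obtain ⟨K, hKR, hK⟩ := Finset.exists_subset_card_eq (hR ▸ hq)
    have := (h ⟨K, hK⟩ (by simp [Finset.inter_eq_left.2 hKR, hK])).2 hKR
    simp at this
  have hcard : Fintype.card (ZMod p × ZMod p × ZMod p) = p ^ 3 := by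
    simp only [Fintype.card_prod, ZMod.card]
    ring
  rw [← hcard]
  refine card_le_blockSens (x := fun _ => false)
    (B := fun u => univ.filter fun T : KSet v 3 => T.1 ⊆ S u) ?_ ?_
  · intro u
    rw [hempty, ne_eq, Bool.not_eq_false, hasIsolatedClique_eq_true]
    exact ⟨S u, hS u, fun T _ => by simp [flipBlock]⟩
  · intro u u' hne
    refine Finset.disjoint_left.2 fun T hT hT' => ?_
    exact hdisj u u' hne T (mem_filter.1 hT).2 (mem_filter.1 hT').2

theorem stmt14 :
    ∃ f : (v : ℕ) → (HGraph v 3 → Bool),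
      (∀ v, IsHypergraphProperty (f v)) ∧
      ∃ c C : ℝ, 0 < c ∧ 0 < C ∧ ∃ v₀ : ℕ, ∀ v : ℕ, v₀ ≤ v →
        (sens (f v) : ℝ) ≤ C * (v : ℝ) ^ ((3 : ℝ) / 2) ∧
        c * (v : ℝ) ^ ((9 : ℝ) / 4) ≤ (blockSens (f v) : ℝ) := by
  refine ⟨fun v => hasIsolatedClique (Nat.sqrt (Nat.sqrt v)) v,
    fun v => isHypergraphProperty_hasIsolatedClique _ v, 1 / 8, 6, by norm_num, by norm_num,
    256, fun v hv => ?_⟩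
  dsimp only
  set q := Nat.sqrt (Nat.sqrt v) with hqdef
  have hq4 : 4 ≤ q := by
    rw [hqdef, Nat.le_sqrt, Nat.le_sqrt]
    exact hv
  have hqv : q ^ 4 ≤ v := by
    calc q ^ 4 = (q * q) * (q * q) := by ring
      _ ≤ Nat.sqrt v * Nat.sqrt v := Nat.mul_le_mul (Nat.sqrt_le _) (Nat.sqrt_le _)
      _ ≤ v := Nat.sqrt_le v
  have hvq : v < (q + 1) ^ 4 := by
    have h1 : Nat.sqrt v < (q + 1) * (q + 1) := Nat.lt_succ_sqrt _
    rw [Nat.sqrt_lt] at h1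
    calc v < _ := h1
      _ = _ := by ring
  set w : ℝ := (v : ℝ) ^ ((1 : ℝ) / 4) with hw
  have hw0 : 0 ≤ w := by positivity
  have hpow : ∀ n : ℕ, w ^ n = (v : ℝ) ^ ((n : ℝ) / 4) := by
    intro n
    rw [hw, ← Real.rpow_natCast, ← Real.rpow_mul (by positivity)]
    congr 1
    ring
  have hw4 : w ^ 4 = v := by
    rw [hpow]
    norm_num
  have hw6 : (v : ℝ) ^ ((3 : ℝ) / 2) = w ^ 6 := by
    rw [hpow]
    norm_num
  have hw9 : (v : ℝ) ^ ((9 : ℝ) / 4) = w ^ 9 := by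
    rw [hpow]
    norm_num
  have hq4r : (4 : ℝ) ≤ q := by exact_mod_cast hq4
  have hqw : (q : ℝ) ≤ w := by
    refine le_of_pow_le_pow_left₀ (n := 4) (by norm_num) hw0 ?_
    rw [hw4]
    exact_mod_cast hqv
  have hwq : w ≤ q + 1 := by
    refine le_of_pow_le_pow_left₀ (n := 4) (by norm_num) (by positivity) ?_
    rw [hw4]
    exact_mod_cast hvq.le
  have hwpos : 0 < w := by linarith
  rw [hw6, hw9]
  constructor
  · obtain ⟨G, -, hG⟩ := Finset.exists_mem_eq_sup (univ : Finset (HGraph v 3)) univ_nonempty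
      (localSens (hasIsolatedClique q v))
    rw [sens, hG]
    cases hval : hasIsolatedClique q v G with
    | true =>
      have h : (localSens (hasIsolatedClique q v) G : ℝ) ≤ q * q * v := by
        exact_mod_cast localSens_le_of_true hval
      calc (localSens (hasIsolatedClique q v) G : ℝ) ≤ q * q * v := h
        _ ≤ w * w * w ^ 4 := by rw [hw4]; gcongr
        _ ≤ 6 * w ^ 6 := by nlinarith [pow_pos hwpos 6]
    | false =>
      have h : (localSens (hasIsolatedClique q v) G : ℝ) * (q * q - q) ≤ v * v := by
        have := localSens_mul_le_of_false hq4 hval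
        rw [← Nat.cast_le (α := ℝ)] at this
        rwa [Nat.cast_mul, Nat.cast_sub (Nat.le_mul_self q), Nat.cast_mul, Nat.cast_mul] at this
      set N : ℝ := (localSens (hasIsolatedClique q v) G : ℝ)
      have hN : 0 ≤ N := Nat.cast_nonneg _
      have hqq : w ^ 2 ≤ 6 * ((q : ℝ) * q - q) := by nlinarith
      rw [← hw4] at h
      have h2 : N * w ^ 2 ≤ 6 * w ^ 6 * w ^ 2 := by
        calc N * w ^ 2 ≤ N * (6 * ((q : ℝ) * q - q)) := by gcongr
          _ = 6 * (N * (q * q - q)) := by ring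
          _ ≤ 6 * (w ^ 4 * w ^ 4) := by gcongr
          _ = _ := by ring
      exact le_of_mul_le_mul_right h2 (by positivity)
  · have hqq : q * (2 * q) ≤ v := by nlinarith [Nat.mul_le_mul hq4 hq4, Nat.zero_le (q * q)]
    have hqn : q ≤ v / (2 * q) := (Nat.le_div_iff_mul_le (by omega)).2 hqq
    obtain ⟨p, hp, hnp, hpn⟩ := Nat.exists_prime_lt_and_le_two_mul (v / (2 * q)) (by omega)
    have hqp : q * p ≤ v := by
      calc q * p ≤ q * (2 * (v / (2 * q))) := by gcongr
        _ = v / (2 * q) * (2 * q) := by ring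
        _ ≤ v := Nat.div_mul_le_self _ _
    have hlow : v < p * (2 * q) := (Nat.div_lt_iff_lt_mul (by omega)).1 hnp
    have hblock := pow_three_le_blockSens hp (by omega) (hqn.trans hnp.le) hqp
    have hlowr : w ^ 4 ≤ p * (2 * q) := by
      rw [hw4]
      exact_mod_cast hlow.le
    have hpw : w ^ 3 / 2 ≤ p := by
      have : w ^ 3 / 2 * (2 * w) ≤ (p : ℝ) * (2 * w) := by
        calc w ^ 3 / 2 * (2 * w) = (w ^ 4 : ℝ) := by ring
          _ ≤ (p : ℝ) * (2 * q) := hlowr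
          _ ≤ (p : ℝ) * (2 * w) := by gcongr
      exact le_of_mul_le_mul_right this (by positivity)
    calc 1 / 8 * w ^ 9 = (w ^ 3 / 2) ^ 3 := by ring
      _ ≤ (p : ℝ) ^ 3 := by gcongr
      _ ≤ _ := by exact_mod_cast hblock
end

section
/- For v ≥ 2, let f_v be the graph property on v vertices defined by f_v(G) = 1 iff G has an isolated vertex (a vertex incident to no edge of G). Then s(f_v) = v − 1. -/
open Finset

/-- The isolated-vertex graph property: some vertex is incident to no edge. -/
noncomputable def isolatedVertexProp (v : ℕ) : HGraph v 2 → Bool :=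
  fun G => @decide (∃ a : Fin v, ∀ E : KSet v 2, G E = true → a ∉ E.1)
    (Classical.propDecidable _)

theorem isolatedVertexProp_eq_true_iff {v : ℕ} {G : HGraph v 2} :
    isolatedVertexProp v G = true ↔ ∃ a : Fin v, ∀ E : KSet v 2, G E = true → a ∉ E.1 := by
  simp [isolatedVertexProp]

theorem exists_mem_of_isolatedVertexProp_eq_false {v : ℕ} {G : HGraph v 2}
    (hG : isolatedVertexProp v G = false) (a : Fin v) :
    ∃ E : KSet v 2, G E = true ∧ a ∈ E.1 := by
  by_contra! h
  have := isolatedVertexProp_eq_true_iff.2 ⟨a, h⟩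
  simp [hG] at this

/-- At most `v - 1` of the 2-subsets contain a given vertex. -/
theorem card_le_of_forall_mem {v : ℕ} {a : Fin v} {S : Finset (KSet v 2)}
    (hS : ∀ E ∈ S, a ∈ E.1) : S.card ≤ v - 1 := by
  have hsub : S.image Subtype.val ⊆ (univ.erase a).image fun b => ({a, b} : Finset (Fin v)) := by
    intro T hT
    obtain ⟨E, hE, rfl⟩ := Finset.mem_image.1 hT
    obtain ⟨b, hb⟩ := Finset.card_eq_one.1
      (show (E.1.erase a).card = 1 by rw [Finset.card_erase_of_mem (hS E hE), E.2])
    have hba : b ∈ E.1.erase a := by simp [hb]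
    refine Finset.mem_image.2 ⟨b, by simpa using (Finset.mem_erase.1 hba).1, ?_⟩
    rw [← hb, Finset.insert_erase (hS E hE)]
  calc S.card = (S.image Subtype.val).card :=
        (Finset.card_image_of_injective _ Subtype.val_injective).symm
    _ ≤ (univ.erase a).card := (Finset.card_le_card hsub).trans Finset.card_image_le
    _ = v - 1 := by simp

/-- If every edge in `S` has an endpoint lying on no other edge, then `S` has at most `v - 1`
elements. -/
theorem card_le_of_forall_exists_leaf {v : ℕ} {G : HGraph v 2} {S : Finset (KSet v 2)}
    (hS : ∀ E ∈ S, ∃ a ∈ E.1, G E = true ∧ ∀ E' : KSet v 2, G E' = true → a ∈ E'.1 → E' = E) :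
    S.card ≤ v - 1 := by
  rcases S.eq_empty_or_nonempty with rfl | ⟨E₀, hE₀⟩
  · simp
  have : Nonempty (Fin v) := ⟨(hS E₀ hE₀).choose⟩
  choose! c hc hG huniq using hS
  obtain ⟨b, hb, hbc⟩ := Finset.exists_mem_ne (by rw [E₀.2]; norm_num : 1 < E₀.1.card) (c E₀)
  calc S.card ≤ (univ.erase b).card := by
        refine Finset.card_le_card_of_injOn c (fun E hE => ?_) fun E hE E' hE' h => ?_
        · have : c E ≠ b := by
            rintro rfl
            exact hbc (by rw [huniq E hE E₀ (hG E₀ hE₀) hb])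
          simpa using this
        · exact huniq E' hE' E (hG E hE) (h ▸ hc E hE)
    _ = v - 1 := by simp

theorem localSens_isolatedVertexProp_le {v : ℕ} (G : HGraph v 2) :
    localSens (isolatedVertexProp v) G ≤ v - 1 := by
  unfold localSens
  cases hG : isolatedVertexProp v G with
  | true =>
    obtain ⟨a, ha⟩ := isolatedVertexProp_eq_true_iff.1 hG
    refine card_le_of_forall_mem (a := a) fun E hE => ?_
    by_contra haE
    refine (Finset.mem_filter.1 hE).2 (isolatedVertexProp_eq_true_iff.2 ⟨a, fun E' hE' => ?_⟩)
    by_cases h : E' = E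
    · rwa [h]
    · rw [Function.update_of_ne h] at hE'
      exact ha E' hE'
  | false =>
    refine card_le_of_forall_exists_leaf (G := G) fun E hE => ?_
    obtain ⟨a, ha⟩ := isolatedVertexProp_eq_true_iff.1
      ((Bool.not_eq_false _).mp (Finset.mem_filter.1 hE).2)
    have huniq : ∀ E' : KSet v 2, G E' = true → a ∈ E'.1 → E' = E := by
      intro E' hE' haE'
      by_contra h
      exact ha E' (by rwa [Function.update_of_ne h]) haE'
    obtain ⟨E', hE', haE'⟩ := exists_mem_of_isolatedVertexProp_eq_false hG a
    obtain rfl := huniq E' hE' haE'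
    exact ⟨a, haE', hE', huniq⟩

/-- The star centred at `z`. -/
def starGraph {v : ℕ} (z : Fin v) : HGraph v 2 := fun E => decide (z ∈ E.1)

theorem isolatedVertexProp_starGraph {v : ℕ} (hv : 2 ≤ v) (z : Fin v) :
    isolatedVertexProp v (starGraph z) = false := by
  rw [← Bool.not_eq_true, isolatedVertexProp_eq_true_iff]
  rintro ⟨a, ha⟩
  have : Nontrivial (Fin v) := Fin.nontrivial_iff_two_le.2 hv
  by_cases h : a = z
  · subst h
    obtain ⟨b, hb⟩ := exists_ne a
    exact ha ⟨{a, b}, Finset.card_pair hb.symm⟩ (by simp [starGraph]) (by simp)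
  · exact ha ⟨{z, a}, Finset.card_pair (Ne.symm h)⟩ (by simp [starGraph]) (by simp)

theorem le_localSens_starGraph {v : ℕ} (hv : 2 ≤ v) (z : Fin v) :
    v - 1 ≤ localSens (isolatedVertexProp v) (starGraph z) := by
  have hsub : (univ.erase z).image (fun b => ({z, b} : Finset (Fin v))) ⊆
      (univ.filter fun E => isolatedVertexProp v
        (Function.update (starGraph z) E (!starGraph z E)) ≠
          isolatedVertexProp v (starGraph z)).image Subtype.val := by
    intro T hT
    obtain ⟨b, hb, rfl⟩ := Finset.mem_image.1 hT
    have hbz : z ≠ b := (Finset.ne_of_mem_erase hb).symm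
    refine Finset.mem_image.2 ⟨⟨{z, b}, Finset.card_pair hbz⟩, ?_, rfl⟩
    rw [Finset.mem_filter, isolatedVertexProp_starGraph hv, Bool.ne_false_iff,
      isolatedVertexProp_eq_true_iff]
    refine ⟨Finset.mem_univ _, b, fun E hE hbE => ?_⟩
    by_cases h : E = ⟨{z, b}, Finset.card_pair hbz⟩
    · subst h
      simp [starGraph] at hE
    · rw [Function.update_of_ne h] at hE
      have hzE : z ∈ E.1 := by simpa [starGraph] using hE
      refine h (Subtype.ext (Finset.eq_of_subset_of_card_le ?_ ?_).symm)
      · simp [Finset.insert_subset_iff, hzE, hbE]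
      · rw [E.2, Finset.card_pair hbz]
  have hinj : Set.InjOn (fun b => ({z, b} : Finset (Fin v))) (univ.erase z : Finset (Fin v)) := by
    intro b hb c hc h
    have hbc : b ∈ ({z, c} : Finset (Fin v)) :=
      (show ({z, b} : Finset (Fin v)) = {z, c} from h) ▸ by simp
    simpa [Finset.ne_of_mem_erase hb] using hbc
  calc v - 1 = ((univ.erase z).image (fun b => ({z, b} : Finset (Fin v)))).card := by
        rw [Finset.card_image_of_injOn hinj]; simp
    _ ≤ _ := (Finset.card_le_card hsub).trans Finset.card_image_le

theorem stmt16 (v : ℕ) (hv : 2 ≤ v) :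
    sens (isolatedVertexProp v) = v - 1 :=
  le_antisymm (Finset.sup_le fun G _ => localSens_isolatedVertexProp_le G)
    ((le_localSens_starGraph hv ⟨0, by omega⟩).trans
      (Finset.le_sup (f := localSens (isolatedVertexProp v)) (Finset.mem_univ _)))
end

section
/- Fix integers k ≥ 2, m > k, 1 ≤ i < k, and v ≥ m + k, let f be the (m,i)-isolated-clique property on v vertices, fix an m-element vertex set H ⊆ Fin v, and let G be the k-uniform hypergraph whose edges are exactly all k-element subsets of H. Then f(G) = 1 and s(f, G) = C(m,k) + |{E : E is a k-element subset of Fin v, E ⊄ H, and |E ∩ H| ≥ i}|, where C(m,k) is the binomial coefficient; in particular s¹(f) ≥ C(m,k) + C(m,i)·C(v−m, k−i). -/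
open Finset

/-- `W` is a witness for the `(m,i)`-isolated-clique property in `G`:
`W` is an `m`-set, every `k`-subset of `W` is an edge, and every edge not inside `W`
meets `W` in fewer than `i` vertices. -/
def IsWitness {v k : ℕ} (m i : ℕ) (G : HGraph v k) (W : Finset (Fin v)) : Prop :=
  W.card = m ∧
  (∀ E : KSet v k, E.1 ⊆ W → G E = true) ∧
  (∀ E : KSet v k, G E = true → ¬ E.1 ⊆ W → (E.1 ∩ W).card < i)

/-- The `(m,i)`-isolated-clique property. -/
noncomputable def isoCliqueProp (v k m i : ℕ) : HGraph v k → Bool :=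
  fun G => @decide (∃ W : Finset (Fin v), IsWitness m i G W) (Classical.propDecidable _)

/-- An `m`-set `W` is a sensitive tuple for `G` if flipping a single `k`-set makes `W`
a witness. -/
def SensitiveTuple {v k : ℕ} (m i : ℕ) (G : HGraph v k) (W : Finset (Fin v)) : Prop :=
  W.card = m ∧ ∃ E : KSet v k, IsWitness m i (Function.update G E (!G E)) W

/-- Any witness that appears after a single flip of the complete hypergraph on `H` is `H`. -/
theorem IsWitness.eq_of_update {v k m i : ℕ} (hk : 2 ≤ k) (hm : k < m)
    {H : Finset (Fin v)} (hH : H.card = m) {G : HGraph v k}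
    (hG : ∀ E : KSet v k, G E = true ↔ E.1 ⊆ H) {E : KSet v k} {b : Bool}
    {W : Finset (Fin v)} (hW : IsWitness m i (Function.update G E b) W) : W = H := by
  obtain ⟨hcard, hclique, -⟩ := hW
  refine Finset.eq_of_subset_of_card_le (fun x hx => ?_) (by omega)
  obtain ⟨y, hyW, hyE⟩ : ∃ y ∈ W, y ∉ E.1 :=
    Finset.exists_mem_notMem_of_card_lt_card (by rw [E.2, hcard]; exact hm)
  obtain ⟨S, hxyS, hSW, hS⟩ := Finset.exists_subsuperset_card_eq
    (Finset.insert_subset hx (Finset.singleton_subset_iff.2 hyW))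
    ((Finset.card_le_two (a := x) (b := y)).trans hk) (by omega)
  have hne : (⟨S, hS⟩ : KSet v k) ≠ E := by
    rintro rfl
    exact hyE (hxyS (by simp))
  have hedge := hclique ⟨S, hS⟩ hSW
  rw [Function.update_of_ne hne, hG] at hedge
  exact hedge (hxyS (by simp))

/-- After flipping `E` in the complete hypergraph on `H`, the set `H` remains a witness iff `E` is
a new edge that meets `H` in fewer than `i` vertices. -/
theorem isWitness_update_not_iff {v k m i : ℕ} {H : Finset (Fin v)} (hH : H.card = m)
    {G : HGraph v k} (hG : ∀ E : KSet v k, G E = true ↔ E.1 ⊆ H) (E : KSet v k) :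
    IsWitness m i (Function.update G E (!G E)) H ↔ ¬ E.1 ⊆ H ∧ (E.1 ∩ H).card < i := by
  constructor
  · rintro ⟨-, hclique, hiso⟩
    have hE : ¬ E.1 ⊆ H := fun hE => by
      simpa [(hG E).2 hE] using hclique E hE
    have hGE : G E = false := by simpa using mt (hG E).1 hE
    exact ⟨hE, hiso E (by simp [hGE]) hE⟩
  · rintro ⟨hE, hlt⟩
    refine ⟨hH, fun F hF => ?_, fun F hF hFH => ?_⟩
    · rw [Function.update_of_ne (by rintro rfl; exact hE hF), hG]
      exact hF
    · by_cases hFE : F = E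
      · exact hFE ▸ hlt
      · rw [Function.update_of_ne hFE, hG] at hF
        exact absurd hF hFH

theorem isoCliqueProp_eq_true_iff {v k m i : ℕ} {G : HGraph v k} :
    isoCliqueProp v k m i G = true ↔ ∃ W : Finset (Fin v), IsWitness m i G W := by
  simp [isoCliqueProp]

theorem card_kSet_subset {v k : ℕ} (H : Finset (Fin v)) :
    (Finset.univ.filter fun E : KSet v k => E.1 ⊆ H).card = H.card.choose k := by
  rw [← Finset.card_powersetCard]
  refine Finset.card_bij (fun E _ => E.1) (fun E hE => ?_) (fun E _ F _ h => Subtype.ext h)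
    (fun S hS => ?_)
  · exact Finset.mem_powersetCard.2 ⟨(Finset.mem_filter.1 hE).2, E.2⟩
  · obtain ⟨hSH, hS⟩ := Finset.mem_powersetCard.1 hS
    exact ⟨⟨S, hS⟩, by simpa using hSH, rfl⟩

theorem choose_mul_choose_le_card_kSet {v k i : ℕ} (hik : i < k) (H : Finset (Fin v)) :
    H.card.choose i * (v - H.card).choose (k - i) ≤
      (Finset.univ.filter fun E : KSet v k => ¬ E.1 ⊆ H ∧ i ≤ (E.1 ∩ H).card).card := by
  have hcompl : Hᶜ.card = v - H.card := by simp [Finset.card_compl]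
  rw [← hcompl, ← Finset.card_powersetCard i H, ← Finset.card_powersetCard (k - i) Hᶜ,
    ← Finset.card_product, ← Finset.card_map (Function.Embedding.subtype _)]
  have hinter : ∀ A B : Finset (Fin v), A ⊆ H → B ⊆ Hᶜ → (A ∪ B) ∩ H = A := by
    intro A B hA hB
    rw [Finset.union_inter_distrib_right, Finset.inter_eq_left.2 hA,
      Finset.disjoint_iff_inter_eq_empty.1 (Finset.subset_compl_iff_disjoint_right.1 hB),
      Finset.union_empty]
  have hsdiff : ∀ A B : Finset (Fin v), A ⊆ H → B ⊆ Hᶜ → (A ∪ B) \ H = B := by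
    intro A B hA hB
    rw [Finset.union_sdiff_distrib, Finset.sdiff_eq_empty_iff_subset.2 hA,
      Finset.sdiff_eq_self_of_disjoint (Finset.subset_compl_iff_disjoint_right.1 hB),
      Finset.empty_union]
  refine Finset.card_le_card_of_injOn (fun p => p.1 ∪ p.2) ?_ ?_
  · rintro ⟨A, B⟩ hp
    obtain ⟨⟨hA, hAi⟩, hB, hBk⟩ := by
      simpa only [Finset.mem_coe, Finset.mem_product, Finset.mem_powersetCard] using hp
    have hdisj : Disjoint A B :=
      Finset.disjoint_of_subset_left hA (Finset.subset_compl_iff_disjoint_left.1 hB)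
    have hcard : (A ∪ B).card = k := by
      rw [Finset.card_union_of_disjoint hdisj]
      omega
    have hnot : ¬ A ∪ B ⊆ H := fun h => by
      have hempty := hsdiff A B hA hB
      rw [Finset.sdiff_eq_empty_iff_subset.2 h] at hempty
      rw [← hempty, Finset.card_empty] at hBk
      omega
    refine Finset.mem_coe.2 (Finset.mem_map.2 ⟨⟨A ∪ B, hcard⟩, ?_, rfl⟩)
    exact Finset.mem_filter.2 ⟨Finset.mem_univ _, hnot, by rw [hinter A B hA hB, hAi]⟩
  · rintro ⟨A, B⟩ hp ⟨A', B'⟩ hp' (h : A ∪ B = A' ∪ B')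
    simp only [Finset.mem_coe, Finset.mem_product, Finset.mem_powersetCard] at hp hp'
    rw [Prod.mk.injEq]
    constructor
    · rw [← hinter A B hp.1.1 hp.2.1, h, hinter A' B' hp'.1.1 hp'.2.1]
    · rw [← hsdiff A B hp.1.1 hp.2.1, h, hsdiff A' B' hp'.1.1 hp'.2.1]

theorem stmt17 (v k m i : ℕ) (hk : 2 ≤ k) (hm : k < m) (hi1 : 1 ≤ i) (hik : i < k)
    (hv : m + k ≤ v) (H : Finset (Fin v)) (hH : H.card = m)
    (G : HGraph v k) (hGdef : ∀ E : KSet v k, G E = true ↔ E.1 ⊆ H) :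
    isoCliqueProp v k m i G = true ∧
    localSens (isoCliqueProp v k m i) G =
      Nat.choose m k +
        (Finset.univ.filter
          (fun E : KSet v k => ¬ E.1 ⊆ H ∧ i ≤ (E.1 ∩ H).card)).card ∧
    Nat.choose m k + Nat.choose m i * Nat.choose (v - m) (k - i) ≤
      sensOn true (isoCliqueProp v k m i) := by
  have htrue : isoCliqueProp v k m i G = true :=
    isoCliqueProp_eq_true_iff.2
      ⟨H, hH, fun E => (hGdef E).2, fun E hE hEH => absurd ((hGdef E).1 hE) hEH⟩
  have hflip : ∀ E : KSet v k,
      isoCliqueProp v k m i (Function.update G E (!G E)) ≠ isoCliqueProp v k m i G ↔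
        E.1 ⊆ H ∨ (¬ E.1 ⊆ H ∧ i ≤ (E.1 ∩ H).card) := by
    intro E
    rw [htrue, Ne, isoCliqueProp_eq_true_iff]
    have hex : (∃ W, IsWitness m i (Function.update G E (!G E)) W) ↔
        ¬ E.1 ⊆ H ∧ (E.1 ∩ H).card < i := by
      rw [← isWitness_update_not_iff hH hGdef]
      exact ⟨fun ⟨W, hW⟩ => hW.eq_of_update hk hm hH hGdef ▸ hW, fun h => ⟨H, h⟩⟩
    rw [hex, ← not_lt]
    tauto
  have hsens : localSens (isoCliqueProp v k m i) G =
      Nat.choose m k +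
        (Finset.univ.filter
          (fun E : KSet v k => ¬ E.1 ⊆ H ∧ i ≤ (E.1 ∩ H).card)).card := by
    rw [localSens, Finset.filter_congr fun E _ => hflip E, Finset.filter_or,
      Finset.card_union_of_disjoint
        (Finset.disjoint_filter.2 fun E _ hE hE' => hE'.1 hE),
      card_kSet_subset, hH]
  refine ⟨htrue, hsens, ?_⟩
  calc
    _ ≤ localSens (isoCliqueProp v k m i) G := by
      rw [hsens, ← hH]
      exact Nat.add_le_add_left (choose_mul_choose_le_card_kSet hik H) _
    _ ≤ _ := Finset.le_sup (f := localSens (isoCliqueProp v k m i))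
      (Finset.mem_filter.2 ⟨Finset.mem_univ G, htrue⟩)
end
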